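/- Let K be a field and s, t distinct integers with s, t ≥ 3, and let α ∈ K \ {0} have multiplicative order greater than max{s, 2t(t−1)}. Then the proper amalgam along ℓ = {a, b, x, y, z} of the hoop matroid M(Γ(K, s, α)) and the loop matroid M(Δ(K, t, α)) is not representable over any field. -/

import Mathlib

open Set

/-- The rank (as an extended natural number) of a set `X` in a matroid `M`. -/
noncomputable def Matroid.erank' {α : Type*} (M : Matroid α) (X : Set α) : ℕ∞ :=
  ⨆ I ∈ {I : Set α | M.Indep I ∧ I ⊆ X}, I.encard

/-- The rank function of the proper amalgam of `M₁` and `M₂`. -/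
noncomputable def amalRank {α : Type*} (M₁ M₂ : Matroid α) (X : Set α) : ℕ∞ :=
  ⨅ Y ∈ {Y : Set α | X ⊆ Y ∧ Y ⊆ M₁.E ∪ M₂.E},
    M₁.erank' (Y ∩ M₁.E) + M₂.erank' (Y ∩ M₂.E) - M₁.erank' (Y ∩ (M₁.E ∩ M₂.E))

/-- `A` is the proper amalgam of `M₁` and `M₂`. -/
def IsProperAmalgam {α : Type*} (M₁ M₂ A : Matroid α) : Prop :=
  A.E = M₁.E ∪ M₂.E ∧ ∀ X ⊆ M₁.E ∪ M₂.E, A.erank' X = amalRank M₁ M₂ X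

/-- A matroid `M` is representable over a field `K`. -/
def RepOver (K : Type) [Field K] {α : Type*} (M : Matroid α) : Prop :=
  ∃ (ι : Type) (φ : α → (ι → K)),
    ∀ I : Set α, I ⊆ M.E → (M.Indep I ↔ LinearIndependent K (fun x : I => φ x.val))

/-- The common ground-set elements of the gain graphs `Γ(K, s, α)` (the hoop gain
graph) and `Δ(L, t, β)` (the loop gain graph) are `a, b, x, y, z`; in addition
`Γ` has loops `a_i` (`hloop`) and the parallel edges `x_i` (`hx`), `y_i` (`hy`),
while `Δ` has the extra edge `g`, loops `b_i` (`lloop`) and the parallel edges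
`e_i` (`le`), `f_i` (`lf`). -/
inductive AmalEdge (s t : ℕ) : Type
  | a | b | x | y | z | g
  | hloop (i : Fin (s - 1))
  | hx (i : Fin s)
  | hy (i : Fin s)
  | lloop (i : Fin (2 * t - 2))
  | le (i : Fin (2 * t - 1))
  | lf (i : Fin (2 * t - 1))
  deriving DecidableEq

/-- The edges of the hoop gain graph `Γ(K, s, α)`. -/
def inHoop {s t : ℕ} : AmalEdge s t → Prop
  | .g | .lloop _ | .le _ | .lf _ => False
  | _ => True

/-- The edges of the loop gain graph `Δ(L, t, β)`. -/
def inLoopGraph {s t : ℕ} : AmalEdge s t → Prop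
  | .hloop _ | .hx _ | .hy _ => False
  | _ => True

/-- The column of the matrix `D(G, σ)` corresponding to an edge oriented from
vertex `u` to vertex `v` with gain `γ`: entry `1` in row `u`, `-γ` in row `v`, zeros
elsewhere (for an unbalanced loop, `u = v` and the column is the standard basis
vector at `u`). -/
def col {K : Type*} [Field K] (u v : ℕ) (γ : K) : ℕ → K :=
  fun i => if i = u then 1 else if i = v then -γ else 0

/-- The columns of the matrix `D(Γ(K, s, α), σ)` of the hoop gain graph on vertices
`u₁, …, u_{s+1}` (indexed `0, …, s`): loops `a` at `u₁`, `b` at `u_{s+1}`, `a_i` at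
`u_i` (`2 ≤ i ≤ s`), all with gain `α`; edges `x_i` (gain `1`) and `y_i` (gain `α`)
from `u_i` to `u_{i+1}`; edges `x, y, z` from `u₁` to `u_{s+1}` with gains
`1, α^(s-1), α^s`. Edges not in `Γ` are sent to the zero vector. -/
def hoopVec (K : Type*) [Field K] (a : K) (s t : ℕ) : AmalEdge s t → ℕ → K
  | .a => col 0 0 a
  | .b => col s s a
  | .x => col 0 s 1
  | .y => col 0 s (a ^ (s - 1))
  | .z => col 0 s (a ^ s)
  | .hloop i => col ((i : ℕ) + 1) ((i : ℕ) + 1) a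
  | .hx i => col (i : ℕ) ((i : ℕ) + 1) 1
  | .hy i => col (i : ℕ) ((i : ℕ) + 1) a
  | _ => fun _ => 0

/-- The columns of the matrix `D(Δ(L, t, β), σ)` of the loop gain graph on vertices
`v₁, …, v_{2t}` (indexed `0, …, 2t-1`): loops `a` at `v₁`, `b` at `v_{2t}`, `b_i` at
`v_i` (`2 ≤ i ≤ 2t-1`), all with gain `β`; edges `e_i` (gain `1`) and `f_i` (gain
`β^(t-1)` for `1 ≤ i ≤ t` and `β^t` for `t+1 ≤ i ≤ 2t-1`) from `v_i` to `v_{i+1}`;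
edges `x, y, z, g` from `v₁` to `v_{2t}` with gains `1, β^(t-1), β^t, β^(t(t-1))`.
Edges not in `Δ` are sent to the zero vector. -/
def loopVec (K : Type*) [Field K] (b : K) (s t : ℕ) : AmalEdge s t → ℕ → K
  | .a => col 0 0 b
  | .b => col (2 * t - 1) (2 * t - 1) b
  | .x => col 0 (2 * t - 1) 1
  | .y => col 0 (2 * t - 1) (b ^ (t - 1))
  | .z => col 0 (2 * t - 1) (b ^ t)
  | .g => col 0 (2 * t - 1) (b ^ (t * (t - 1)))
  | .lloop i => col ((i : ℕ) + 1) ((i : ℕ) + 1) b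
  | .le i => col (i : ℕ) ((i : ℕ) + 1) 1
  | .lf i => col (i : ℕ) ((i : ℕ) + 1) (if (i : ℕ) < t then b ^ (t - 1) else b ^ t)
  | _ => fun _ => 0

/-- `M` is the hoop matroid `M(Γ(K, s, α))`: the gain-graphic matroid of the hoop
gain graph, realised as the column matroid of the matrix `D(Γ(K, s, α), σ)`. -/
def IsHoopMatroid (K : Type*) [Field K] (a : K) (s t : ℕ)
    (M : Matroid (AmalEdge s t)) : Prop :=
  M.E = {e | inHoop e} ∧
    ∀ I : Set (AmalEdge s t),
      M.Indep I ↔ I ⊆ {e | inHoop e} ∧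
        LinearIndependent K (fun x : I => hoopVec K a s t x.val)

/-- `M` is the loop matroid `M(Δ(L, t, β))`: the gain-graphic matroid of the loop
gain graph, realised as the column matroid of the matrix `D(Δ(L, t, β), σ)`. -/
def IsLoopMatroid (K : Type*) [Field K] (b : K) (s t : ℕ)
    (M : Matroid (AmalEdge s t)) : Prop :=
  M.E = {e | inLoopGraph e} ∧
    ∀ I : Set (AmalEdge s t),
      M.Indep I ↔ I ⊆ {e | inLoopGraph e} ∧
        LinearIndependent K (fun x : I => loopVec K b s t x.val)

/-!
If `u` is on the line of two joints `P`, `Q` and parallel to neither, which is a property of the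
matroid, then in any representation `u` is a multiple of `P - γ • Q` for a unique nonzero gain `γ`.
On a path of joints the gains telescope, so the edges of a path together with an edge `c` joining
its ends are dependent exactly when the gain of `c` is the product of the gains along the path:
every representation, over any field, has the same balanced cycles as the given gain graph.

Let `X`, `Y`, `Z` be the gains of `x`, `y`, `z` in some representation and `b i` the ratio of the
gains of the two `i`-th parallel edges. In the hoop graph the balanced cycles closed by `y` and `z`
say that every product of `s - 1` of the `b i` is `Y / X` and that the product of all of them is
`Z / X`. So the `b i` share one value `β`, with `Y / X = β ^ (s - 1)` and `Z / X = β ^ s`. In the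
loop graph `b i` is `Y / X` for `t` indices and `Z / X` for the other `t - 1`, and the element `g`
closes both groups at once, whence `(Y / X) ^ t = (Z / X) ^ (t - 1)`. Together these give
`β ^ s = β ^ t`, while the cycles closed by `x` show that `β` inherits from `α` that its small
powers are not `1`.
-/

open Function Module Submodule
open scoped Matroid

section Amalgam

variable {α : Type*} {M N M₁ M₂ A : Matroid α}

lemma erank'_eq_eRk (M : Matroid α) (X : Set α) : M.erank' X = M.eRk X := by
  refine le_antisymm (iSup₂_le fun I hI ↦ hI.1.encard_le_eRk_of_subset hI.2) ?_
  obtain ⟨I, hI⟩ := M.exists_isBasis' X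
  rw [← hI.encard_eq_eRk]
  exact le_iSup₂_of_le I ⟨hI.indep, hI.subset⟩ le_rfl

lemma isRestriction_of_eRk_eq [M.RankFinite] [N.RankFinite] (hE : M.E ⊆ N.E)
    (h : ∀ X ⊆ M.E, N.eRk X = M.eRk X) : M ≤r N := by
  refine ⟨M.E, hE, Matroid.ext_indep rfl fun I hI ↦ ?_⟩
  rw [Matroid.restrict_indep_iff, Matroid.indep_iff_eRk_eq_encard, Matroid.indep_iff_eRk_eq_encard,
    h I hI, and_iff_left hI]

namespace IsProperAmalgam

lemma symm (hA : IsProperAmalgam M₁ M₂ A) (hag : M₁ ↾ (M₁.E ∩ M₂.E) = M₂ ↾ (M₁.E ∩ M₂.E)) :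
    IsProperAmalgam M₂ M₁ A := by
  refine ⟨by rw [hA.1, union_comm], fun X hX ↦ ?_⟩
  rw [union_comm] at hX
  have hcommon (Y : Set α) :
      M₁.erank' (Y ∩ (M₁.E ∩ M₂.E)) = M₂.erank' (Y ∩ (M₂.E ∩ M₁.E)) := by
    rw [inter_comm M₂.E, erank'_eq_eRk, erank'_eq_eRk, ← Matroid.restrict_eRk_eq' M₁,
      ← Matroid.restrict_eRk_eq' M₂, hag]
  rw [hA.2 X hX, amalRank, amalRank, union_comm M₂.E]
  simp only [hcommon, add_comm (M₂.erank' _)]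

lemma eRk_eq_left [M₁.RankFinite] (hA : IsProperAmalgam M₁ M₂ A)
    (hag : M₁ ↾ (M₁.E ∩ M₂.E) = M₂ ↾ (M₁.E ∩ M₂.E)) {X : Set α} (hX : X ⊆ M₁.E) :
    A.eRk X = M₁.eRk X := by
  have hcommon (Y : Set α) : M₂.eRk (Y ∩ (M₁.E ∩ M₂.E)) = M₁.eRk (Y ∩ (M₁.E ∩ M₂.E)) := by
    rw [← Matroid.restrict_eRk_eq' M₁, ← Matroid.restrict_eRk_eq' M₂, hag]
  rw [← erank'_eq_eRk, hA.2 X (hX.trans subset_union_left), amalRank]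
  simp only [erank'_eq_eRk]
  apply le_antisymm
  · refine iInf₂_le_of_le X ⟨Subset.rfl, hX.trans subset_union_left⟩ ?_
    have hX₂ : X ∩ M₂.E = X ∩ (M₁.E ∩ M₂.E) := by rw [← inter_assoc, inter_eq_left.2 hX]
    rw [inter_eq_left.2 hX, hX₂, hcommon, tsub_le_iff_right]
  · refine le_iInf₂ fun Y hY ↦ ENat.le_sub_of_add_le_right
      (Matroid.eRk_ne_top_iff.2 (M₁.isRkFinite_set _)) (add_le_add ?_ ?_)
    · exact M₁.eRk_mono (subset_inter hY.1 hX)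
    · rw [← hcommon]
      exact M₂.eRk_mono (inter_subset_inter_right Y inter_subset_right)

lemma isRestriction_left [M₁.RankFinite] [A.RankFinite] (hA : IsProperAmalgam M₁ M₂ A)
    (hag : M₁ ↾ (M₁.E ∩ M₂.E) = M₂ ↾ (M₁.E ∩ M₂.E)) : M₁ ≤r A :=
  isRestriction_of_eRk_eq (hA.1 ▸ subset_union_left) fun _ hX ↦ hA.eRk_eq_left hag hX

lemma isRestriction_right [M₂.RankFinite] [A.RankFinite] (hA : IsProperAmalgam M₁ M₂ A)
    (hag : M₁ ↾ (M₁.E ∩ M₂.E) = M₂ ↾ (M₁.E ∩ M₂.E)) : M₂ ≤r A :=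
  (hA.symm hag).isRestriction_left (by rw [inter_comm, hag])

end IsProperAmalgam

end Amalgam

section Representation

variable {E F K L V W : Type*} [Field F] [Field K] [Field L] [AddCommGroup V] [AddCommGroup W]

/-- The family `v` represents the matroid `M` over `F`: the independent sets of `M` are the sets
on which `v` is linearly independent. Elements outside the ground set are then sent to `0`. -/
def IsRepresentation (F : Type*) [Field F] {E V : Type*} [AddCommGroup V] [Module F V]
    (v : E → V) (M : Matroid E) : Prop :=
  ∀ I, M.Indep I ↔ LinearIndepOn F v I

lemma linearIndepOn_indicator_iff [Module F V] {v : E → V} {R I : Set E} :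
    LinearIndepOn F (R.indicator v) I ↔ I ⊆ R ∧ LinearIndepOn F v I := by
  have hcongr (hIR : I ⊆ R) : LinearIndepOn F (R.indicator v) I ↔ LinearIndepOn F v I :=
    linearIndepOn_congr fun i hi ↦ indicator_of_mem (hIR hi) v
  refine ⟨fun h ↦ ?_, fun h ↦ (hcongr h.1).2 h.2⟩
  have hIR : I ⊆ R := fun i hi ↦ by_contra fun hiR ↦ h.ne_zero hi (indicator_of_notMem hiR v)
  exact ⟨hIR, (hcongr hIR).1 h⟩

lemma RepOver.exists_isRepresentation {F : Type} [Field F] {M : Matroid E} (h : RepOver F M) :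
    ∃ (ι : Type) (v : E → ι → F), IsRepresentation F v M := by
  obtain ⟨ι, v, hv⟩ := h
  refine ⟨ι, M.E.indicator v, fun I ↦ ?_⟩
  rw [linearIndepOn_indicator_iff]
  exact ⟨fun hI ↦ ⟨hI.subset_ground, (hv I hI.subset_ground).1 hI⟩, fun hI ↦ (hv I hI.1).2 hI.2⟩

lemma linearIndependent_comp_iff_linearIndepOn_range [Module F V] {ι : Type*} {v : E → V}
    (f : ι → E) :
    LinearIndependent F (v ∘ f) ↔ Injective f ∧ LinearIndepOn F v (range f) := by
  refine ⟨fun h ↦ ?_, fun h ↦ (linearIndepOn_range_iff h.1 v).1 h.2⟩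
  have hf : Injective f := h.injective.of_comp
  exact ⟨hf, (linearIndepOn_range_iff hf v).2 h⟩

namespace IsRepresentation

variable [Module F V] [Module K V] [Module L W] {M : Matroid E}

lemma restrict {v : E → V} (h : IsRepresentation F v M) (R : Set E) :
    IsRepresentation F (R.indicator v) (M ↾ R) := fun I ↦ by
  rw [Matroid.restrict_indep_iff, linearIndepOn_indicator_iff, h I, and_comm]

lemma linearIndependent_comp_iff {v : E → V} {w : E → W} (hv : IsRepresentation K v M)
    (hw : IsRepresentation L w M) {ι : Type*} (f : ι → E) :
    LinearIndependent K (v ∘ f) ↔ LinearIndependent L (w ∘ f) := by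
  rw [linearIndependent_comp_iff_linearIndepOn_range,
    linearIndependent_comp_iff_linearIndepOn_range, ← hv, ← hw]

end IsRepresentation

end Representation

lemma linearIndependent_pair_of_ne {ι F V : Type*} [Field F] [AddCommGroup V] [Module F V]
    {v : ι → V} (hv : LinearIndependent F v) {i j : ι} (hij : i ≠ j) :
    LinearIndependent F ![v i, v j] := by
  have hinj : Function.Injective ![i, j] := by
    simp [Function.Injective, Fin.forall_fin_two, hij, hij.symm]
  have h := hv.comp _ hinj
  rwa [← FinVec.map_eq] at h

section Gain

variable {F V : Type*} [Field F] [AddCommGroup V] [Module F V] {P Q u : V} {γ δ : Fˣ}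

/-- `u` behaves as an edge of gain `γ` from the joint `P` to the joint `Q` of a frame: it is a
nonzero multiple of `P - γ • Q`. Gains are taken in the group of units. -/
def HasGain (P Q u : V) (γ : Fˣ) : Prop :=
  ∃ c : Fˣ, u = c • (P - γ • Q)

lemma HasGain.mem_iff (h : HasGain P Q u γ) {S : Submodule F V} : u ∈ S ↔ P - γ • Q ∈ S := by
  obtain ⟨c, rfl⟩ := h
  exact S.smul_mem_iff' c

lemma exists_hasGain_iff (h : LinearIndependent F ![P, Q]) :
    (∃ γ : Fˣ, HasGain P Q u γ) ↔ LinearIndependent F ![P, u] ∧ LinearIndependent F ![Q, u] ∧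
      ¬ LinearIndependent F ![u, P, Q] := by
  have hPu (x y : F) : LinearIndependent F ![P, x • P + y • Q] ↔ y ≠ 0 := by
    simpa [h, eq_comm] using
      LinearIndependent.pair_add_smul_add_smul_iff (R := F) (x := P) (y := Q) 1 0 x y
  have hQu (x y : F) : LinearIndependent F ![Q, x • P + y • Q] ↔ x ≠ 0 := by
    simpa [h, eq_comm] using
      LinearIndependent.pair_add_smul_add_smul_iff (R := F) (x := P) (y := Q) 0 1 x y
  have hspan : ¬ LinearIndependent F ![u, P, Q] ↔ ∃ x y : F, x • P + y • Q = u := by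
    rw [← mem_span_pair, ← Matrix.range_cons_cons_empty P Q ![]]
    exact (linearIndependent_finCons.trans (and_iff_right h)).not_left
  rw [hspan]
  constructor
  · rintro ⟨γ, c, rfl⟩
    have hu : c • (P - γ • Q) = (c : F) • P + (-(c * γ) : F) • Q := by
      simp only [Units.smul_def]; module
    rw [hu, hPu, hQu]
    exact ⟨by simp, by simp, _, _, rfl⟩
  · rintro ⟨hP, hQ, x, y, rfl⟩
    have hx : x ≠ 0 := (hQu x y).1 hQ
    have hy : y ≠ 0 := (hPu x y).1 hP
    refine ⟨Units.mk0 (-y / x) (by simp [hx, hy]), Units.mk0 x hx, ?_⟩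
    simp only [Units.smul_def, Units.val_mk0, smul_sub, smul_smul, mul_div_cancel₀ _ hx]
    module

lemma HasGain.transfer {E K L V W : Type*} [Field K] [Field L] [AddCommGroup V] [Module K V]
    [AddCommGroup W] [Module L W] {v : E → V} {w : E → W} {M : Matroid E}
    (hv : IsRepresentation K v M) (hw : IsRepresentation L w M) {p q u : E} {γ : Kˣ}
    (hpq : LinearIndependent K ![v p, v q]) (h : HasGain (v p) (v q) (v u) γ) :
    ∃ δ : Lˣ, HasGain (w p) (w q) (w u) δ := by
  have h₂ (p q : E) : LinearIndependent K ![v p, v q] ↔ LinearIndependent L ![w p, w q] := by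
    simpa only [← FinVec.map_eq] using! hv.linearIndependent_comp_iff hw ![p, q]
  have h₃ : LinearIndependent K ![v u, v p, v q] ↔ LinearIndependent L ![w u, w p, w q] := by
    simpa only [← FinVec.map_eq] using! hv.linearIndependent_comp_iff hw ![u, p, q]
  rw [exists_hasGain_iff ((h₂ p q).1 hpq), ← h₂, ← h₂, ← h₃, ← exists_hasGain_iff hpq]
  exact ⟨γ, h⟩

lemma partialProd_last {M : Type*} [CommMonoid M] {n : ℕ} (f : Fin n → M) :
    Fin.partialProd f (Fin.last n) = ∏ i, f i := by
  rw [Fin.partialProd, Fin.val_last, List.take_of_length_le (by simp), List.prod_ofFn]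

variable {n : ℕ} {P : Fin (n + 1) → V} {W : Fin n → V} {γ : Fin n → Fˣ} {c : V} {r : Fˣ}

lemma sub_partialProd_smul_mem_span (hW : ∀ i, HasGain (P i.castSucc) (P i.succ) (W i) (γ i))
    (j : Fin (n + 1)) : P 0 - Fin.partialProd γ j • P j ∈ span F (range W) := by
  induction j using Fin.induction with
  | zero => simp
  | succ i ih =>
    have hi : P i.castSucc - γ i • P i.succ ∈ span F (range W) :=
      (hW i).mem_iff.1 (subset_span (mem_range_self i))
    have := add_mem ih (smul_mem _ ((Fin.partialProd γ i.castSucc : Fˣ) : F) hi)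
    rwa [← Units.smul_def, smul_sub, sub_add_sub_cancel, smul_smul, ← Fin.partialProd_succ] at this

lemma mem_of_joint_last_mem (hW : ∀ i, HasGain (P i.castSucc) (P i.succ) (W i) (γ i))
    {S : Submodule F V} (hS : ∀ i, W i ∈ S) (hlast : P (Fin.last n) ∈ S) (j : Fin (n + 1)) :
    P j ∈ S := by
  induction j using Fin.reverseInduction with
  | last => exact hlast
  | cast i ih =>
    have hi : P i.castSucc - γ i • P i.succ ∈ S := (hW i).mem_iff.1 (hS i)
    exact (sub_mem_iff_left S ((S.smul_mem_iff' (γ i)).2 ih)).1 hi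

lemma linearIndependent_cons_iff_prod_gain_ne (hP : LinearIndependent F P)
    (hW : ∀ i, HasGain (P i.castSucc) (P i.succ) (W i) (γ i))
    (hc : HasGain (P 0) (P (Fin.last n)) c r) :
    LinearIndependent F (Fin.cons c W : Fin (n + 1) → V) ↔ ∏ i, γ i ≠ r := by
  have htel : P 0 - (∏ i, γ i) • P (Fin.last n) ∈ span F (range W) := by
    simpa only [partialProd_last] using sub_partialProd_smul_mem_span hW (Fin.last n)
  refine ⟨fun h hr ↦ (linearIndependent_finCons.1 h).2 (hc.mem_iff.2 (hr ▸ htel)), fun hr ↦ ?_⟩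
  let S := span F (range (Fin.cons c W : Fin (n + 1) → V))
  have hcS : P 0 - r • P (Fin.last n) ∈ S := hc.mem_iff.1 (subset_span ⟨0, rfl⟩)
  have hWS (i : Fin n) : W i ∈ S := subset_span ⟨i.succ, rfl⟩
  have hlast : P (Fin.last n) ∈ S := by
    have hmem := S.sub_mem hcS (span_le.2 (range_subset_iff.2 hWS) htel)
    rw [sub_sub_sub_cancel_left, Units.smul_def, Units.smul_def, ← sub_smul] at hmem
    exact (S.smul_mem_iff (sub_ne_zero.2 (Units.val_injective.ne hr))).1 hmem
  have hPS : span F (range P) ≤ S :=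
    span_le.2 (range_subset_iff.2 (mem_of_joint_last_mem hW hWS hlast))
  rw [linearIndependent_iff_card_le_finrank_span, ← finrank_span_eq_card hP]
  have := FiniteDimensional.span_of_finite F (finite_range (Fin.cons c W : Fin (n + 1) → V))
  exact Submodule.finrank_mono hPS

lemma IsRepresentation.prod_gain_eq_iff {E K L V W : Type*} [Field K] [Field L] [AddCommGroup V]
    [Module K V] [AddCommGroup W] [Module L W] {v : E → V} {w : E → W} {M : Matroid E}
    {p : Fin (n + 1) → E} (hv : IsRepresentation K v M) (hw : IsRepresentation L w M)
    (hp : LinearIndependent K (v ∘ p)) {u : Fin n → E} {c : E} {γ : Fin n → Kˣ} {δ : Fin n → Lˣ}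
    {r : Kˣ} {q : Lˣ}
    (hγ : ∀ i, HasGain (v (p i.castSucc)) (v (p i.succ)) (v (u i)) (γ i))
    (hδ : ∀ i, HasGain (w (p i.castSucc)) (w (p i.succ)) (w (u i)) (δ i))
    (hr : HasGain (v (p 0)) (v (p (Fin.last n))) (v c) r)
    (hq : HasGain (w (p 0)) (w (p (Fin.last n))) (w c) q) : ∏ i, γ i = r ↔ ∏ i, δ i = q := by
  have hcycle := hv.linearIndependent_comp_iff hw (Fin.cons c u : Fin (n + 1) → E)
  have hpw := (hv.linearIndependent_comp_iff hw p).1 hp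
  rw [Fin.comp_cons, Fin.comp_cons, linearIndependent_cons_iff_prod_gain_ne (W := v ∘ u) hp hγ hr,
    linearIndependent_cons_iff_prod_gain_ne (W := w ∘ u) hpw hδ hq] at hcycle
  exact not_iff_not.1 hcycle

end Gain
section Line

variable {E F V : Type*} [Field F] [AddCommGroup V] [Module F V] {v : E → V}

lemma linearIndepOn_pair_iff_linearIndependent {e f : E} (hef : e ≠ f) :
    LinearIndepOn F v {e, f} ↔ LinearIndependent F ![v e, v f] := by
  rw [LinearIndepOn.pair_iff v hef, LinearIndependent.pair_iff]

lemma HasGain.linearIndependent_pair {P Q u u' : V} {γ δ : Fˣ} (h : LinearIndependent F ![P, Q])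
    (hu : HasGain P Q u γ) (hu' : HasGain P Q u' δ) (hγδ : γ ≠ δ) :
    LinearIndependent F ![u, u'] := by
  obtain ⟨c, rfl⟩ := hu
  obtain ⟨d, rfl⟩ := hu'
  have hcol (c γ : Fˣ) : c • (P - γ • Q) = (c : F) • P + (-(c * γ) : F) • Q := by
    simp only [Units.smul_def]; module
  rw [hcol, hcol, LinearIndependent.pair_add_smul_add_smul_iff]
  refine ⟨h, fun hdet ↦ hγδ (Units.ext ?_)⟩
  refine mul_left_cancel₀ (mul_ne_zero c.ne_zero d.ne_zero) ?_
  linear_combination hdet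

lemma linearIndepOn_iff_encard_le_two {P Q : V} {ℓ J : Set E} (hℓ : ℓ.Nontrivial)
    (hpair : ℓ.Pairwise fun e f ↦ LinearIndependent F ![v e, v f])
    (hspan : ∀ e ∈ ℓ, v e ∈ span F {P, Q}) (hJ : J ⊆ ℓ) :
    LinearIndepOn F v J ↔ J.encard ≤ 2 := by
  refine ⟨fun h ↦ ?_, fun h ↦ ?_⟩
  · classical
    have hcard : Fintype.card ({P, Q} : Set V) ≤ 2 := by
      simpa only [← toFinset_card, toFinset_insert, toFinset_singleton] using Finset.card_le_two
    have hrange : range (fun e : J ↦ v e) ≤ span F {P, Q} :=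
      range_subset_iff.2 fun e ↦ hspan e (hJ e.2)
    rw [← toENat_cardinalMk]
    exact Cardinal.toENat_le_natCast.2
      ((linearIndependent_le_span' _ h _ hrange).trans (Nat.cast_le.2 hcard))
  · obtain ⟨B, hJB, hBℓ, hB⟩ := exists_superset_subset_encard_eq hJ h
      (one_lt_encard_iff_nontrivial.2 hℓ |> Order.add_one_le_of_lt)
    obtain ⟨e, f, hef, rfl⟩ := encard_eq_two.1 hB
    refine ((linearIndepOn_pair_iff_linearIndependent hef).2 (hpair ?_ ?_ hef)).mono hJB <;>
      apply hBℓ <;> simp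

lemma linearIndepOn_iff_encard_le_two_of_hasGain {p q : E} {C J : Set E} {γ : E → Fˣ}
    (hpq : LinearIndependent F ![v p, v q]) (hC : ∀ c ∈ C, HasGain (v p) (v q) (v c) (γ c))
    (hγ : InjOn γ C) (hJ : J ⊆ insert p (insert q C)) : LinearIndepOn F v J ↔ J.encard ≤ 2 := by
  have hne : p ≠ q := by rintro rfl; simpa using hpq.injective.ne (a₁ := 0) (a₂ := 1)
  have hjoint {c : E} (hc : c ∈ C) := (exists_hasGain_iff hpq).1 ⟨_, hC c hc⟩
  have : Std.Symm fun e f ↦ LinearIndependent F ![v e, v f] :=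
    ⟨fun _ _ ↦ LinearIndependent.pair_symm_iff.1⟩
  refine linearIndepOn_iff_encard_le_two (P := v p) (Q := v q)
    ⟨p, mem_insert _ _, q, by simp, hne⟩ ?_ ?_ hJ
  · refine pairwise_insert_of_symm.2 ⟨pairwise_insert_of_symm.2 ⟨?_, ?_⟩, ?_⟩
    · exact fun c hc d hd hcd ↦ (hC c hc).linearIndependent_pair hpq (hC d hd) (hγ.ne hc hd hcd)
    · exact fun c hc _ ↦ (hjoint hc).2.1
    · rintro c (rfl | hc) _
      exacts [hpq, (hjoint hc).1]
  · rintro c (rfl | rfl | hc)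
    · exact subset_span (by simp)
    · exact subset_span (by simp)
    · exact (hC c hc).mem_iff.2 (sub_mem (subset_span (by simp))
        ((Submodule.smul_mem_iff' _ _).2 (subset_span (by simp))))

end Line


section SubproductsMatch

variable {ι G H : Type*} [CommGroup G] [CommGroup H] {κ : ι → G} {b : ι → H} {γ c d : G}
  {δ η ζ ω : H}

/-- The subfamilies of `κ` with product `γ` are the subfamilies of `b` with product `δ`. For a path
whose edges are doubled, `κ` and `b` being the ratios of the two gains on each pair of parallel
edges, this says that two gain functions agree on which paths close up to a balanced cycle. -/
def SubproductsMatch (κ : ι → G) (b : ι → H) (γ : G) (δ : H) : Prop :=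
  ∀ S : Finset ι, ∏ i ∈ S, κ i = γ ↔ ∏ i ∈ S, b i = δ

namespace SubproductsMatch

lemma eq_of_eq (h : SubproductsMatch κ b γ δ) {i : ι} (hi : κ i = γ) : b i = δ := by
  simpa [hi] using h {i}

lemma pow_eq_iff (h : SubproductsMatch κ b γ δ) {T : Finset ι} (hκ : ∀ i ∈ T, κ i = c)
    (hb : ∀ i ∈ T, b i = η) {k : ℕ} (hk : k ≤ T.card) : c ^ k = γ ↔ η ^ k = δ := by
  obtain ⟨S, hST, rfl⟩ := T.exists_subset_card_eq hk
  rw [← Finset.prod_eq_pow_card fun i hi ↦ hκ i (hST hi),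
    ← Finset.prod_eq_pow_card fun i hi ↦ hb i (hST hi)]
  exact h S

lemma exists_eq_pow [Fintype ι] [Nonempty ι] {n : ℕ} (hn : Fintype.card ι = n)
    (h₁ : SubproductsMatch (fun _ ↦ c) b 1 1) (hη : SubproductsMatch (fun _ ↦ c) b (c ^ (n - 1)) η)
    (hζ : SubproductsMatch (fun _ ↦ c) b (c ^ n) ζ) :
    ∃ β : H, η = β ^ (n - 1) ∧ ζ = β ^ n ∧ ∀ k ≤ n, c ^ k = 1 ↔ β ^ k = 1 := by
  classical
  subst hn
  have hb (i : ι) : b i = ζ / η := by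
    have hη' : ∏ j ∈ Finset.univ.erase i, b j = η := (hη _).1 (by simp)
    have hζ' : ∏ j, b j = ζ := (hζ _).1 (by simp)
    rw [← hη', ← hζ', ← Finset.mul_prod_erase _ b (Finset.mem_univ i), mul_div_cancel_right]
  have hpow {γ : G} {δ : H} (h : SubproductsMatch (fun _ ↦ c) b γ δ) {k : ℕ}
      (hk : k ≤ Fintype.card ι) : c ^ k = γ ↔ (ζ / η) ^ k = δ :=
    h.pow_eq_iff (T := .univ) (fun _ _ ↦ rfl) (fun i _ ↦ hb i) hk
  exact ⟨ζ / η, ((hpow hη (Nat.sub_le _ _)).1 rfl).symm, ((hpow hζ le_rfl).1 rfl).symm,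
    fun _ ↦ hpow h₁⟩

lemma pow_card_eq_pow_card {T U : Finset ι} (hT : ∀ i ∈ T, κ i = c) (hU : ∀ i ∈ U, κ i = d)
    (hη : SubproductsMatch κ b c η) (hζ : SubproductsMatch κ b d ζ)
    (hω : SubproductsMatch κ b γ ω) (hc : c ^ T.card = γ) (hd : d ^ U.card = γ) :
    η ^ T.card = ζ ^ U.card := by
  rw [(hω.pow_eq_iff hT (fun i hi ↦ hη.eq_of_eq (hT i hi)) le_rfl).1 hc,
    (hω.pow_eq_iff hU (fun i hi ↦ hζ.eq_of_eq (hU i hi)) le_rfl).1 hd]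

end SubproductsMatch

lemma pow_eq_pow_of_pow_pred_pow_eq {β : H} {s t : ℕ} (hs : 0 < s) (ht : 0 < t)
    (h : (β ^ (s - 1)) ^ t = (β ^ s) ^ (t - 1)) : β ^ s = β ^ t := by
  obtain ⟨s, rfl⟩ := Nat.exists_eq_add_one.2 hs
  obtain ⟨t, rfl⟩ := Nat.exists_eq_add_one.2 ht
  rw [Nat.add_sub_cancel, Nat.add_sub_cancel, ← pow_mul, ← pow_mul, mul_add, add_mul, pow_add,
    pow_add, mul_right_inj] at h
  simpa [pow_succ] using h

lemma exists_pow_eq_one_of_pow_eq_pow {α : G} {β : H} {s t : ℕ} (hs : 0 < s) (hst : s ≠ t)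
    (hpow : β ^ s = β ^ t) (hα : ∀ k ≤ s, α ^ k = 1 ↔ β ^ k = 1)
    (hα' : ∀ k ≤ t, (α ^ (t - 1)) ^ k = 1 ↔ (β ^ (s - 1)) ^ k = 1) :
    ∃ k, 1 ≤ k ∧ k ≤ max s (t * (t - 1)) ∧ α ^ k = 1 := by
  rcases hst.lt_or_gt with hlt | hlt
  · have hβ : β ^ (t - s) = 1 := by rw [pow_sub β hlt.le, hpow, mul_inv_cancel]
    refine ⟨(t - 1) * (t - s), Nat.mul_pos (by omega) (by omega), le_max_of_le_right ?_, ?_⟩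
    · rw [mul_comm]
      exact Nat.mul_le_mul_right _ (Nat.sub_le t s)
    · rw [pow_mul, hα' _ (Nat.sub_le t s), pow_right_comm, hβ, one_pow]
  · have hβ : β ^ (s - t) = 1 := by rw [pow_sub β hlt.le, hpow, mul_inv_cancel]
    exact ⟨s - t, Nat.sub_pos_of_lt hlt, by omega, (hα _ (Nat.sub_le s t)).2 hβ⟩

end SubproductsMatch

section DoubledPath

variable {E K L V W : Type*} [Field K] [Field L] [AddCommGroup V] [Module K V] [AddCommGroup W]
  [Module L W] {v : E → V} {w : E → W} {M : Matroid E} {n : ℕ} {p : Fin (n + 1) → E}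
  {e f : Fin n → E} {κ : Fin n → Kˣ}

/-- In the representation `v`, the elements `p 0, …, p n` are the joints of a path on which the
consecutive joints `p i` and `p (i + 1)` are linked by an edge `e i` of gain `1` and an edge `f i`
of gain `κ i`. -/
structure IsDoubledPath (v : E → V) (p : Fin (n + 1) → E) (e f : Fin n → E) (κ : Fin n → Kˣ) :
    Prop where
  linearIndependent : LinearIndependent K (v ∘ p)
  hasGain_left (i : Fin n) : HasGain (v (p i.castSucc)) (v (p i.succ)) (v (e i)) (1 : Kˣ)
  hasGain_right (i : Fin n) : HasGain (v (p i.castSucc)) (v (p i.succ)) (v (f i)) (κ i)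

namespace IsDoubledPath

lemma exists_subproductsMatch (h : IsDoubledPath v p e f κ) {P Q : E} (hP : p 0 = P)
    (hQ : p (Fin.last n) = Q) (hv : IsRepresentation K v M) (hw : IsRepresentation L w M) {x : E}
    {X : Lˣ} (hx : HasGain (v P) (v Q) (v x) (1 : Kˣ)) (hX : HasGain (w P) (w Q) (w x) X) :
    ∃ b : Fin n → Lˣ, ∀ {c : E} {γ : Kˣ} {δ : Lˣ}, HasGain (v P) (v Q) (v c) γ →
      HasGain (w P) (w Q) (w c) δ → SubproductsMatch κ b γ (δ / X) := by
  subst hP hQ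
  have hpair (i : Fin n) : LinearIndependent K ![v (p i.castSucc), v (p i.succ)] :=
    linearIndependent_pair_of_ne h.linearIndependent i.castSucc_lt_succ.ne
  choose ε hε using fun i ↦ (h.hasGain_left i).transfer hv hw (hpair i)
  choose φ hφ using fun i ↦ (h.hasGain_right i).transfer hv hw (hpair i)
  have hcycle (S : Finset (Fin n)) {c : E} {γ : Kˣ} {δ : Lˣ}
      (hγ : HasGain (v (p 0)) (v (p (Fin.last n))) (v c) γ)
      (hδ : HasGain (w (p 0)) (w (p (Fin.last n))) (w c) δ) :
      ∏ i ∈ S, κ i = γ ↔ (∏ i ∈ S, φ i / ε i) * ∏ i, ε i = δ := by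
    have hκ : ∏ i, S.piecewise κ 1 i = ∏ i ∈ S, κ i := by simp [Finset.prod_piecewise]
    have hb : ∏ i, S.piecewise φ ε i = (∏ i ∈ S, φ i / ε i) * ∏ i, ε i := by
      rw [Finset.prod_piecewise, Finset.univ_inter, Finset.prod_div_distrib,
        ← Finset.prod_mul_prod_compl S ε, ← mul_assoc, div_mul_cancel, Finset.compl_eq_univ_sdiff]
    rw [← hκ, ← hb]
    refine hv.prod_gain_eq_iff hw h.linearIndependent (u := S.piecewise f e) ?_ ?_ hγ hδ <;>
      intro i <;> by_cases hi : i ∈ S <;>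
      simp only [hi, Finset.piecewise_eq_of_mem, Finset.piecewise_eq_of_notMem, not_false_eq_true]
    exacts [h.hasGain_right i, h.hasGain_left i, hφ i, hε i]
  have hεX : ∏ i, ε i = X := by simpa using hcycle ∅ hx hX
  exact ⟨fun i ↦ φ i / ε i, fun hγ hδ S ↦ by rw [hcycle S hγ hδ, hεX, eq_div_iff_mul_eq']⟩

end IsDoubledPath

end DoubledPath

section GainGraphs

variable {K L W : Type*} [Field K] [Field L] [AddCommGroup W] [Module L W] {s t n : ℕ} {a : K}
  {v : AmalEdge s t → ℕ → K} {w : AmalEdge s t → W} {M M₁ M₂ : Matroid (AmalEdge s t)}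

instance : Finite (AmalEdge s t) := by
  refine finite_univ_iff.1 (Finite.subset (s := {.a, .b, .x, .y, .z, .g} ∪ range .hloop ∪
    range .hx ∪ range .hy ∪ range .lloop ∪ range .le ∪ range .lf) (toFinite _) fun e _ ↦ ?_)
  cases e <;> simp

lemma IsHoopMatroid.isRepresentation (h : IsHoopMatroid K a s t M) :
    IsRepresentation K (hoopVec K a s t) M := fun I ↦ by
  rw [h.2, and_iff_right_of_imp]
  · rfl
  · intro hI e he
    have hne := LinearIndepOn.ne_zero (s := I) hI he
    cases e <;> trivial

lemma IsLoopMatroid.isRepresentation (h : IsLoopMatroid K a s t M) :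
    IsRepresentation K (loopVec K a s t) M := fun I ↦ by
  rw [h.2, and_iff_right_of_imp]
  · rfl
  · intro hI e he
    have hne := LinearIndepOn.ne_zero (s := I) hI he
    cases e <;> trivial

lemma col_self (u : ℕ) (γ : K) : col u u γ = Pi.single u 1 := by
  ext i
  by_cases hi : i = u <;> simp [col, hi]

lemma col_eq_sub {u v : ℕ} (h : u ≠ v) (γ : K) :
    col u v γ = Pi.single u 1 - γ • Pi.single v 1 := by
  ext i
  by_cases hu : i = u
  · simp [col, hu, h]
  · by_cases hv : i = v <;> simp [col, hu, hv, h.symm]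

lemma hasGain_col {i j : ℕ} (h : i ≠ j) (c : K) (γ : Kˣ) :
    HasGain (col i i c) (col j j c) (col i j (γ : K)) γ :=
  ⟨1, by rw [one_smul, col_self, col_self, col_eq_sub h, Units.smul_def]⟩

lemma hasGain_of_eq_col (hn : 0 ≠ n) (ha : v .a = col 0 0 a) (hb : v .b = col n n a)
    {c : AmalEdge s t} {γ : Kˣ} (hc : v c = col 0 n (γ : K)) : HasGain (v .a) (v .b) (v c) γ := by
  rw [ha, hb, hc]
  exact hasGain_col hn a γ

lemma linearIndependent_col_self (c : K) : LinearIndependent K fun i ↦ col i i c := by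
  simpa only [col_self] using Pi.linearIndependent_single_one ℕ K

lemma linearIndependent_pair_of_eq_col (hn : 0 ≠ n) (ha : v .a = col 0 0 a)
    (hb : v .b = col n n a) : LinearIndependent K ![v .a, v .b] := by
  rw [ha, hb]
  exact linearIndependent_pair_of_ne (linearIndependent_col_self a) hn

/-- The loops at the vertices `0, …, n` of either gain graph, `m` enumerating those at the inner
vertices. -/
def vertexLoop (m : Fin (n - 1) → AmalEdge s t) (i : Fin (n + 1)) : AmalEdge s t :=
  if h₀ : (i : ℕ) = 0 then .a else if hn : (i : ℕ) = n then .b else m ⟨i - 1, by omega⟩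

lemma vertexLoop_zero (m : Fin (n - 1) → AmalEdge s t) : vertexLoop m 0 = .a := rfl

lemma vertexLoop_last (hn : n ≠ 0) (m : Fin (n - 1) → AmalEdge s t) :
    vertexLoop m (Fin.last n) = .b := by
  simp [vertexLoop, hn]

lemma eq_col_vertexLoop {m : Fin (n - 1) → AmalEdge s t} (ha : v .a = col 0 0 a)
    (hb : v .b = col n n a) (hm : ∀ i, v (m i) = col (i + 1) (i + 1) a) (i : Fin (n + 1)) :
    v (vertexLoop m i) = col i i a := by
  unfold vertexLoop
  split_ifs with h₀ hn
  · rw [ha, h₀]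
  · rw [hb, hn]
  · rw [hm, Nat.sub_add_cancel (Nat.one_le_iff_ne_zero.2 h₀)]

lemma isDoubledPath_of_eq_col {m : Fin (n - 1) → AmalEdge s t} {e f : Fin n → AmalEdge s t}
    {κ : Fin n → Kˣ} (ha : v .a = col 0 0 a) (hb : v .b = col n n a)
    (hm : ∀ i, v (m i) = col (i + 1) (i + 1) a) (he : ∀ i, v (e i) = col i (i + 1) 1)
    (hf : ∀ i, v (f i) = col i (i + 1) (κ i : K)) : IsDoubledPath v (vertexLoop m) e f κ := by
  have hloop := eq_col_vertexLoop ha hb hm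
  refine ⟨?_, fun i ↦ ?_, fun i ↦ ?_⟩
  · rw [show v ∘ vertexLoop m = (fun i ↦ col i i a) ∘ Fin.val from funext hloop]
    exact (linearIndependent_col_self a).comp _ Fin.val_injective
  · rw [hloop, hloop, he]
    exact hasGain_col (Nat.ne_add_one _) a 1
  · rw [hloop, hloop, hf]
    exact hasGain_col (Nat.ne_add_one _) a (κ i)

lemma isDoubledPath_hoopVec (a : Kˣ) :
    IsDoubledPath (hoopVec K (a : K) s t) (vertexLoop .hloop) .hx .hy fun _ ↦ a :=
  isDoubledPath_of_eq_col rfl rfl (fun _ ↦ rfl) (fun _ ↦ rfl) fun _ ↦ rfl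

lemma isDoubledPath_loopVec (a : Kˣ) :
    IsDoubledPath (loopVec K (a : K) s t) (vertexLoop (n := 2 * t - 1) .lloop) .le .lf
      fun i ↦ if (i : ℕ) < t then a ^ (t - 1) else a ^ t := by
  refine isDoubledPath_of_eq_col (a := (a : K)) rfl rfl (fun _ ↦ rfl) (fun _ ↦ rfl) fun i ↦ ?_
  simp only [loopVec, apply_ite Units.val, Units.val_pow_eq_pow_val]

lemma IsHoopMatroid.exists_gain_eq_pow {a : Kˣ} (hs : 0 < s) (hM : IsHoopMatroid K (a : K) s t M)
    (hw : IsRepresentation L w M) {X Y Z : Lˣ} (hX : HasGain (w .a) (w .b) (w .x) X)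
    (hY : HasGain (w .a) (w .b) (w .y) Y) (hZ : HasGain (w .a) (w .b) (w .z) Z) :
    ∃ β : Lˣ, Y / X = β ^ (s - 1) ∧ Z / X = β ^ s ∧ ∀ k ≤ s, a ^ k = 1 ↔ β ^ k = 1 := by
  have : Nonempty (Fin s) := ⟨⟨0, hs⟩⟩
  have hgain {c : AmalEdge s t} {γ : Kˣ} (hc : hoopVec K (a : K) s t c = col 0 s (γ : K)) :=
    hasGain_of_eq_col (v := hoopVec K (a : K) s t) (a := (a : K)) hs.ne rfl rfl hc
  have hx := hgain (c := .x) (γ := 1) rfl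
  have hy := hgain (c := .y) (γ := a ^ (s - 1)) (by simp [hoopVec])
  have hz := hgain (c := .z) (γ := a ^ s) (by simp [hoopVec])
  obtain ⟨b, hb⟩ := (isDoubledPath_hoopVec a).exists_subproductsMatch (vertexLoop_zero _)
    (vertexLoop_last hs.ne' _) hM.isRepresentation hw hx hX
  exact SubproductsMatch.exists_eq_pow (Fintype.card_fin s) (div_self' X ▸ hb hx hX) (hb hy hY)
    (hb hz hZ)

lemma IsLoopMatroid.exists_gain_pow_eq {a : Kˣ} (ht : 0 < t) (hM : IsLoopMatroid K (a : K) s t M)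
    (hw : IsRepresentation L w M) :
    ∃ X Y Z : Lˣ, HasGain (w .a) (w .b) (w .x) X ∧ HasGain (w .a) (w .b) (w .y) Y ∧
      HasGain (w .a) (w .b) (w .z) Z ∧ (Y / X) ^ t = (Z / X) ^ (t - 1) ∧
      ∀ k ≤ t, (a ^ (t - 1)) ^ k = 1 ↔ (Y / X) ^ k = 1 := by
  have hn : 0 ≠ 2 * t - 1 := by omega
  have hgain {c : AmalEdge s t} {γ : Kˣ}
      (hc : loopVec K (a : K) s t c = col 0 (2 * t - 1) (γ : K)) :=
    hasGain_of_eq_col (v := loopVec K (a : K) s t) (a := (a : K)) hn rfl rfl hc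
  have hx := hgain (c := .x) (γ := 1) rfl
  have hy := hgain (c := .y) (γ := a ^ (t - 1)) (by simp [loopVec])
  have hz := hgain (c := .z) (γ := a ^ t) (by simp [loopVec])
  have hg := hgain (c := .g) (γ := a ^ (t * (t - 1))) (by simp [loopVec])
  have hab : LinearIndependent K ![loopVec K (a : K) s t .a, loopVec K (a : K) s t .b] :=
    linearIndependent_pair_of_eq_col hn rfl rfl
  obtain ⟨X, hX⟩ := hx.transfer hM.isRepresentation hw hab
  obtain ⟨Y, hY⟩ := hy.transfer hM.isRepresentation hw hab
  obtain ⟨Z, hZ⟩ := hz.transfer hM.isRepresentation hw hab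
  obtain ⟨G, hG⟩ := hg.transfer hM.isRepresentation hw hab
  obtain ⟨b, hb⟩ := (isDoubledPath_loopVec a).exists_subproductsMatch (vertexLoop_zero _)
    (vertexLoop_last hn.symm _) hM.isRepresentation hw hx hX
  let T : Finset (Fin (2 * t - 1)) := {i | (i : ℕ) < t}
  have hT (i) (hi : i ∈ T) : (if (i : ℕ) < t then a ^ (t - 1) else a ^ t) = a ^ (t - 1) :=
    if_pos (by simpa [T] using hi)
  have hTc (i) (hi : i ∈ Tᶜ) : (if (i : ℕ) < t then a ^ (t - 1) else a ^ t) = a ^ t :=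
    if_neg (by simpa [T] using hi)
  have hcard : T.card = t := by rw [Fin.card_filter_val_lt]; omega
  have hcardc : Tᶜ.card = t - 1 := by rw [Finset.card_compl, hcard, Fintype.card_fin]; omega
  refine ⟨X, Y, Z, hX, hY, hZ, ?_, fun k hk ↦ ?_⟩
  · have hpow := SubproductsMatch.pow_card_eq_pow_card hT hTc (hb hy hY) (hb hz hZ) (hb hg hG)
      (by rw [hcard, ← pow_mul, mul_comm]) (by rw [hcardc, ← pow_mul])
    rwa [hcard, hcardc] at hpow
  · have horder := hb hx hX
    rw [div_self'] at horder
    exact horder.pow_eq_iff hT (fun i hi ↦ (hb hy hY).eq_of_eq (hT i hi)) (hcard.symm ▸ hk)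

/-- The line `ℓ` along which the hoop matroid and the loop matroid are amalgamated. -/
def commonLine (s t : ℕ) : Set (AmalEdge s t) :=
  {.a, .b, .x, .y, .z}

lemma linearIndepOn_commonLine_iff {η ζ : Kˣ} (hn : 0 ≠ n) (hη : η ≠ 1) (hζ : ζ ≠ 1) (hηζ : η ≠ ζ)
    (ha : v .a = col 0 0 a) (hb : v .b = col n n a) (hx : v .x = col 0 n 1)
    (hy : v .y = col 0 n (η : K)) (hz : v .z = col 0 n (ζ : K)) {J : Set (AmalEdge s t)}
    (hJ : J ⊆ commonLine s t) : LinearIndepOn K v J ↔ J.encard ≤ 2 := by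
  let γ : AmalEdge s t → Kˣ
    | .y => η
    | .z => ζ
    | _ => 1
  refine linearIndepOn_iff_encard_le_two_of_hasGain (γ := γ)
    (linearIndependent_pair_of_eq_col hn ha hb) ?_ ?_ hJ
  · rintro c (rfl | rfl | rfl)
    exacts [hasGain_of_eq_col hn ha hb hx, hasGain_of_eq_col hn ha hb hy,
      hasGain_of_eq_col hn ha hb hz]
  · rintro c (rfl | rfl | rfl) d (rfl | rfl | rfl) <;>
      simp [γ, hη, hζ, hηζ, hη.symm, hζ.symm, hηζ.symm]

lemma IsHoopMatroid.inter_ground_eq_commonLine (hM₁ : IsHoopMatroid K a s t M₁)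
    (hM₂ : IsLoopMatroid K a s t M₂) : M₁.E ∩ M₂.E = commonLine s t := by
  rw [hM₁.1, hM₂.1]
  ext e
  cases e <;> simp [inHoop, inLoopGraph, commonLine]

lemma IsHoopMatroid.restrict_inter_ground_eq {a : Kˣ} (hs : 2 ≤ s) (ht : 2 ≤ t)
    (ha : ∀ k, 1 ≤ k → k ≤ max s t → a ^ k ≠ 1) (hM₁ : IsHoopMatroid K (a : K) s t M₁)
    (hM₂ : IsLoopMatroid K (a : K) s t M₂) : M₁ ↾ (M₁.E ∩ M₂.E) = M₂ ↾ (M₁.E ∩ M₂.E) := by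
  have hne {m : ℕ} (hm : 1 ≤ m) : a ^ (m - 1) ≠ a ^ m := by
    rw [← Nat.sub_add_cancel hm, Nat.add_sub_cancel, pow_succ, ne_eq, left_eq_mul]
    simpa using ha 1 le_rfl (by omega)
  rw [hM₁.inter_ground_eq_commonLine hM₂]
  refine Matroid.ext_indep rfl fun I (hI : I ⊆ commonLine s t) ↦ ?_
  rw [Matroid.restrict_indep_iff, Matroid.restrict_indep_iff, hM₁.isRepresentation,
    hM₂.isRepresentation,
    linearIndepOn_commonLine_iff (n := s) (a := (a : K)) (η := a ^ (s - 1)) (ζ := a ^ s) (by omega)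
      (ha _ (by omega) (by omega)) (ha _ (by omega) (by omega)) (hne (by omega)) rfl rfl rfl
      (by simp [hoopVec]) (by simp [hoopVec]) hI,
    linearIndepOn_commonLine_iff (n := 2 * t - 1) (a := (a : K)) (η := a ^ (t - 1)) (ζ := a ^ t)
      (by omega) (ha _ (by omega) (by omega)) (ha _ (by omega) (by omega)) (hne (by omega)) rfl rfl
      rfl (by simp [loopVec]) (by simp [loopVec]) hI]

end GainGraphs

theorem amalgam_not_representable_general {K L W : Type*} [Field K] [Field L] [AddCommGroup W]
    [Module L W] {s t : ℕ} (hs : 0 < s) (ht : 0 < t) (hst : s ≠ t) {a : Kˣ}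
    (horder : ∀ k : ℕ, 1 ≤ k → k ≤ max s (t * (t - 1)) → a ^ k ≠ 1)
    {M₁ M₂ A : Matroid (AmalEdge s t)} (hM₁ : IsHoopMatroid K (a : K) s t M₁)
    (hM₂ : IsLoopMatroid K (a : K) s t M₂) (hA₁ : M₁ ≤r A) (hA₂ : M₂ ≤r A)
    (φ : AmalEdge s t → W) : ¬ IsRepresentation L φ A := by
  intro hφ
  have hφ₁ : IsRepresentation L (M₁.E.indicator φ) M₁ := hA₁.eq_restrict ▸ hφ.restrict M₁.E
  have hφ₂ : IsRepresentation L (M₂.E.indicator φ) M₂ := hA₂.eq_restrict ▸ hφ.restrict M₂.E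
  have heq : EqOn (M₁.E.indicator φ) (M₂.E.indicator φ) (commonLine s t) := by
    rw [← hM₁.inter_ground_eq_commonLine hM₂]
    exact fun e he ↦ (indicator_of_mem he.1 φ).trans (indicator_of_mem he.2 φ).symm
  obtain ⟨X, Y, Z, hX, hY, hZ, hYZ, hyorder⟩ := hM₂.exists_gain_pow_eq ht hφ₂
  rw [← heq (by simp [commonLine]), ← heq (by simp [commonLine]), ← heq (by simp [commonLine])]
    at hX hY hZ
  obtain ⟨β, hy, hz, hβorder⟩ := hM₁.exists_gain_eq_pow hs hφ₁ hX hY hZ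
  have hpow : β ^ s = β ^ t := pow_eq_pow_of_pow_pred_pow_eq hs ht (by rw [← hy, ← hz, hYZ])
  obtain ⟨k, hk, hkst, hak⟩ :=
    exists_pow_eq_one_of_pow_eq_pow hs hst hpow hβorder (by rwa [← hy])
  exact horder k hk hkst hak

/-- Let `K` be a field and `s ≠ t` with `s, t ≥ 3`, and let `α ∈ K \ {0}` have
multiplicative order greater than `max {s, 2t(t-1)}`. Then the proper amalgam along
`ℓ = {a, b, x, y, z}` of the hoop matroid `M(Γ(K, s, α))` and the loop matroid
`M(Δ(K, t, α))` is not representable over any field. -/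
theorem amalgam_not_representable (K : Type) [Field K] (s t : ℕ)
    (hs : 3 ≤ s) (ht : 3 ≤ t) (hst : s ≠ t)
    (a : K) (ha : a ≠ 0)
    (horder : ∀ k : ℕ, 1 ≤ k → k ≤ max s (2 * t * (t - 1)) → a ^ k ≠ 1)
    (M₁ M₂ A : Matroid (AmalEdge s t))
    (hM₁ : IsHoopMatroid K a s t M₁)
    (hM₂ : IsLoopMatroid K a s t M₂)
    (hA : IsProperAmalgam M₁ M₂ A) :
    ¬ ∃ (L : Type) (_ : Field L), RepOver L A := by
  rintro ⟨L, _, hL⟩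
  obtain ⟨ι, φ, hφ⟩ := hL.exists_isRepresentation
  lift a to Kˣ using ha.isUnit
  have ha_pow {m : ℕ} (hm : m ≤ 2 * t * (t - 1)) (k : ℕ) (hk : 1 ≤ k) (hkm : k ≤ max s m) :
      a ^ k ≠ 1 := fun h ↦
    horder k hk (hkm.trans (max_le_max_left s hm)) (by simpa using congrArg Units.val h)
  have ht₁ : t ≤ 2 * t * (t - 1) :=
    (Nat.le_mul_of_pos_left t two_pos).trans (Nat.le_mul_of_pos_right _ (by omega))
  have ht₂ : t * (t - 1) ≤ 2 * t * (t - 1) := Nat.mul_le_mul_right _ (by omega)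
  have hag : M₁ ↾ (M₁.E ∩ M₂.E) = M₂ ↾ (M₁.E ∩ M₂.E) :=
    hM₁.restrict_inter_ground_eq (by omega) (by omega) (ha_pow ht₁) hM₂
  exact amalgam_not_representable_general (by omega) (by omega) hst (ha_pow ht₂) hM₁ hM₂
    (hA.isRestriction_left hag) (hA.isRestriction_right hag) φ hφ
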